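/- Let k ≥ 1 and let I = (k₁, …, k_s) be a partition of k, i.e. a multiset of positive integers with sum k and s parts. Define C_I to be the sum of (−1)^{e(G)} over all simple graphs G on the vertex set Fin k whose multiset of connected component cardinalities equals I. Then (∏_m r_m!) · (k₁·k₂···k_s) · C_I = (−1)^{k−s} · k!, where for each distinct part size m of I, r_m denotes the multiplicity of m in I; equivalently C_I = k!·(−1)^{k−s} / (r₁!···r_s!·k₁k₂···k_s). -/

import Mathlib

open scoped Classical

/-!
Both `G ↦ (-1) ^ e(G)`, summed over the graphs whose components refine a fixed set partition `p`,
and `σ ↦ sign σ`, summed over the permutations whose cycles refine `p`, vanish unless `p` is the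
partition into singletons, in which case they equal `1`: the graph sum is an alternating sum over
the subsets of an edge set, and multiplication by a transposition inside a block of `p` reverses the
sign of a permutation. By Möbius inversion, the signed number of graphs with components exactly `p`
and the signed number of permutations with cycles exactly `p` are both the Möbius function `μ(⊥, p)`
of the lattice of set partitions. Hence `C_I` is the signed number of permutations of cycle type
`I`, and these form a conjugacy class of known size on which the sign is constant.
-/

section MoebiusInversion

open Finset IncidenceAlgebra

variable {α P 𝕜 : Type*} [Fintype α] [Ring 𝕜] [PartialOrder P] [OrderBot P] [LocallyFiniteOrder P]
  {r : α → P} {u : α → 𝕜}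

lemma sum_filter_eq_mu_bot
    (h : ∀ p, ∑ a with r a ≤ p, u a = if p = ⊥ then 1 else 0) (p : P) :
    ∑ a with r a = p, u a = mu 𝕜 ⊥ p := by
  have hIic (q : P) : (if q = ⊥ then 1 else 0) = ∑ p ∈ Iic q, ∑ a with r a = p, u a := by
    simp [sum_fiberwise_eq_sum_filter univ (Iic q) r u, h]
  simp [moebius_inversion_bot _ _ hIic]

lemma sum_filter_comp_eq_sum_mu_bot [Fintype P]
    (h : ∀ p, ∑ a with r a ≤ p, u a = if p = ⊥ then 1 else 0) (Q : P → Prop) :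
    ∑ a with Q (r a), u a = ∑ p with Q p, mu 𝕜 ⊥ p := by
  simp [← sum_filter_eq_mu_bot h, sum_fiberwise_eq_sum_filter univ _ r u]

end MoebiusInversion

section Setoid

variable {V : Type*} {p : Setoid V}

lemma finite_setoid [Finite V] : Finite (Setoid V) :=
  Finite.of_injective (fun p : Setoid V ↦ ⇑p) fun _ _ h ↦ Setoid.ext fun x y ↦ by
    simpa using congrFun₂ h x y

lemma setoid_eq_bot_iff : p = ⊥ ↔ ∀ x y, p x y → x = y :=
  le_bot_iff.symm.trans Setoid.le_def

lemma fromRel_eq_bot_iff : SimpleGraph.fromRel p = ⊥ ↔ p = ⊥ := by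
  rw [← le_bot_iff, setoid_eq_bot_iff]
  constructor
  · intro h x y hxy
    by_contra hne
    exact h ⟨hne, .inl hxy⟩
  · rintro h x y ⟨hne, hxy | hyx⟩
    exacts [hne (h x y hxy), hne (h y x hyx).symm]

lemma reachableSetoid_le_iff {G : SimpleGraph V} :
    G.reachableSetoid ≤ p ↔ G ≤ SimpleGraph.fromRel p := by
  constructor
  · exact fun h x y hxy ↦ ⟨hxy.ne, .inl (h hxy.reachable)⟩
  · rintro h x y ⟨w⟩
    induction w with
    | nil => exact p.refl _
    | cons hxy _ ih => exact p.trans ((h hxy).2.elim id p.symm) ih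

lemma sameCycleSetoid_le_iff {σ : Equiv.Perm V} :
    Equiv.Perm.SameCycle.setoid σ ≤ p ↔ ∀ x, p x (σ x) := by
  constructor
  · exact fun h x ↦ h (Equiv.Perm.sameCycle_apply_right.2 (.refl σ x))
  · rintro h x _ ⟨n, rfl⟩
    induction n with
    | zero => exact p.refl _
    | succ n ih => rw [add_comm, zpow_one_add]; exact p.trans ih (h _)
    | pred n ih =>
      have hstep := h ((σ ^ (-n - 1 : ℤ)) x)
      rw [← Equiv.Perm.mul_apply, ← zpow_one_add, add_sub_cancel] at hstep
      exact p.trans ih (p.symm hstep)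

end Setoid

section SignedSums

open Finset

variable {V : Type*} [Fintype V] [DecidableEq V]

lemma image_edgeFinset_filter_le (H : SimpleGraph V) :
    image (fun G ↦ G.edgeFinset) {G | G ≤ H} = H.edgeFinset.powerset := by
  ext s
  simp only [mem_image, mem_filter_univ, mem_powerset]
  constructor
  · rintro ⟨G, hG, rfl⟩
    exact SimpleGraph.edgeFinset_mono hG
  · intro hs
    refine ⟨H.deleteEdges (sᶜ : Set (Sym2 V)), H.deleteEdges_le _, ?_⟩
    ext e
    simpa using fun he ↦ by simpa using hs he

lemma sum_neg_one_pow_card_edgeSet_of_le (H : SimpleGraph V) :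
    ∑ G with G ≤ H, (-1 : ℤ) ^ Nat.card G.edgeSet = if H = ⊥ then 1 else 0 := by
  calc
    _ = ∑ s ∈ H.edgeFinset.powerset, (-1 : ℤ) ^ #s := by
      rw [← image_edgeFinset_filter_le, sum_image fun G _ G' _ ↦ SimpleGraph.edgeFinset_inj.1]
      simp only [Nat.card_eq_fintype_card, SimpleGraph.edgeFinset_card]
    _ = _ := by simp [sum_powerset_neg_one_pow_card]

lemma sum_neg_one_pow_card_edgeSet_of_reachableSetoid_le (p : Setoid V) :
    ∑ G : SimpleGraph V with G.reachableSetoid ≤ p, (-1 : ℤ) ^ Nat.card G.edgeSet =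
      if p = ⊥ then 1 else 0 := by
  simp only [reachableSetoid_le_iff, sum_neg_one_pow_card_edgeSet_of_le, fromRel_eq_bot_iff]

lemma sum_sign_of_sameCycleSetoid_le (p : Setoid V) :
    ∑ σ : Equiv.Perm V with Equiv.Perm.SameCycle.setoid σ ≤ p, (σ.sign : ℤ) =
      if p = ⊥ then 1 else 0 := by
  simp only [sameCycleSetoid_le_iff]
  split_ifs with hp
  · have hone (σ : Equiv.Perm V) : (∀ x, p x (σ x)) ↔ σ = 1 := by
      constructor
      · exact fun h ↦ Equiv.ext fun x ↦ (setoid_eq_bot_iff.1 hp x (σ x) (h x)).symm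
      · rintro rfl x
        exact p.refl x
    simp [hone, filter_eq']
  · obtain ⟨a, b, hpab, hab⟩ : ∃ a b, p a b ∧ a ≠ b := by simpa [setoid_eq_bot_iff] using hp
    have hswap (y : V) : p y (Equiv.swap a b y) := by
      rw [Equiv.swap_apply_def]
      split_ifs with hya hyb
      · exact hya ▸ hpab
      · exact hyb ▸ p.symm hpab
      · exact p.refl y
    refine sum_involution (fun σ _ ↦ Equiv.swap a b * σ) ?_ ?_ ?_ ?_
    · simp [Equiv.Perm.sign_swap hab]
    · simp [hab]
    · simp only [mem_filter_univ]
      exact fun σ hσ x ↦ p.trans (hσ x) (hswap (σ x))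
    · simp

lemma sum_neg_one_pow_card_edgeSet_eq_sum_sign (Q : Setoid V → Prop) :
    ∑ G : SimpleGraph V with Q G.reachableSetoid, (-1 : ℤ) ^ Nat.card G.edgeSet =
      ∑ σ : Equiv.Perm V with Q (Equiv.Perm.SameCycle.setoid σ), (σ.sign : ℤ) := by
  have := finite_setoid (V := V)
  let _ := Fintype.ofFinite (Setoid V)
  let _ : LocallyFiniteOrder (Setoid V) := Fintype.toLocallyFiniteOrder
  rw [sum_filter_comp_eq_sum_mu_bot sum_neg_one_pow_card_edgeSet_of_reachableSetoid_le,
    sum_filter_comp_eq_sum_mu_bot sum_sign_of_sameCycleSetoid_le]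

end SignedSums

section BlockSizes

open Finset Equiv.Perm

variable {V : Type*} [DecidableEq V]

lemma image_part_eq_parts {s : Finset V} (P : Finpartition s) : s.image P.part = P.parts := by
  rw [← coe_inj, coe_image]
  exact P.part_surjOn.image_eq_of_mapsTo fun x hx ↦ P.part_mem.2 hx

variable [Fintype V]

/-- The type of the set partition of `V` given by `p`: the multiset of cardinalities of its blocks.
It is the common invariant through which component sizes and cycle types are compared. -/
noncomputable def blockSizes (p : Setoid V) : Multiset ℕ :=
  (Finpartition.ofSetoid p).parts.val.map card

lemma parts_ofSetoid_reachableSetoid (G : SimpleGraph V) :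
    (Finpartition.ofSetoid G.reachableSetoid).parts =
      univ.image fun c : G.ConnectedComponent ↦ c.supp.toFinset := by
  have hpart : (Finpartition.ofSetoid G.reachableSetoid).part =
      (fun c ↦ c.supp.toFinset) ∘ G.connectedComponentMk := by
    ext x y
    rw [Finpartition.mem_part_ofSetoid_iff_rel, Function.comp_apply, Set.mem_toFinset,
      SimpleGraph.ConnectedComponent.mem_supp_iff, SimpleGraph.ConnectedComponent.eq]
    exact SimpleGraph.reachable_comm
  rw [← image_part_eq_parts, hpart, ← image_image,
    image_univ_of_surjective (f := G.connectedComponentMk) Quot.mk_surjective]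

lemma blockSizes_reachableSetoid (G : SimpleGraph V) :
    blockSizes G.reachableSetoid =
      univ.val.map fun c : G.ConnectedComponent ↦ Nat.card c.supp := by
  rw [blockSizes, parts_ofSetoid_reachableSetoid, image_val_of_injOn, Multiset.map_map]
  · simp [Nat.card_eq_fintype_card]
  · exact fun c _ d _ h ↦ SimpleGraph.ConnectedComponent.supp_injective (Set.toFinset_inj.1 h)

variable {σ : Equiv.Perm V} {x : V}

lemma part_sameCycleSetoid_of_mem_support (hx : x ∈ σ.support) :
    (Finpartition.ofSetoid (SameCycle.setoid σ)).part x = (σ.cycleOf x).support := by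
  ext y
  rw [Finpartition.mem_part_ofSetoid_iff_rel, mem_support_cycleOf_iff' (mem_support.1 hx)]
  rfl

lemma part_sameCycleSetoid_of_notMem_support (hx : x ∉ σ.support) :
    (Finpartition.ofSetoid (SameCycle.setoid σ)).part x = {x} := by
  ext y
  rw [Finpartition.mem_part_ofSetoid_iff_rel, mem_singleton]
  constructor
  · exact fun h ↦ (h.eq_of_left (notMem_support.1 hx)).symm
  · rintro rfl
    exact .refl σ y

variable (σ)

lemma image_cycleOf_support : σ.support.image σ.cycleOf = σ.cycleFactorsFinset := by
  ext c
  rw [mem_image]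
  constructor
  · rintro ⟨x, hx, rfl⟩
    exact cycleOf_mem_cycleFactorsFinset_iff.2 hx
  · intro hc
    obtain ⟨x, hx⟩ := (mem_cycleFactorsFinset_iff.1 hc).1.nonempty_support
    exact ⟨x, mem_cycleFactorsFinset_support_le hc hx, (cycle_is_cycleOf hx hc).symm⟩

lemma parts_ofSetoid_sameCycleSetoid :
    (Finpartition.ofSetoid (SameCycle.setoid σ)).parts =
      σ.cycleFactorsFinset.image support ∪ σ.supportᶜ.image singleton := by
  set part := (Finpartition.ofSetoid (SameCycle.setoid σ)).part
  calc
    _ = (σ.support ∪ σ.supportᶜ).image part := by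
      rw [union_compl, image_part_eq_parts]
    _ = σ.support.image (support ∘ σ.cycleOf) ∪ σ.supportᶜ.image singleton := by
      rw [image_union]
      congr 1
      · exact image_congr fun x hx ↦ part_sameCycleSetoid_of_mem_support hx
      · exact image_congr fun x hx ↦ part_sameCycleSetoid_of_notMem_support (mem_compl.1 hx)
    _ = _ := by rw [← image_image, image_cycleOf_support]

lemma support_injOn_cycleFactorsFinset :
    Set.InjOn (support : Equiv.Perm V → Finset V) σ.cycleFactorsFinset := by
  intro c hc d hd hcd
  obtain ⟨x, hx⟩ := (mem_cycleFactorsFinset_iff.1 hc).1.nonempty_support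
  rw [cycle_is_cycleOf hx hc, cycle_is_cycleOf (hcd ▸ hx) hd]

lemma disjoint_image_support_image_singleton (s : Finset V) :
    Disjoint (σ.cycleFactorsFinset.image support) (s.image singleton) := by
  simp only [disjoint_left, mem_image, not_exists, not_and]
  rintro _ ⟨c, hc, rfl⟩ x - hxc
  have htwo : 2 ≤ #c.support := (mem_cycleFactorsFinset_iff.1 hc).1.two_le_card_support
  simp [← hxc] at htwo

lemma blockSizes_sameCycleSetoid : blockSizes (SameCycle.setoid σ) = σ.partition.parts := by
  rw [blockSizes, parts_ofSetoid_sameCycleSetoid,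
    ← disjUnion_eq_union _ _ (disjoint_image_support_image_singleton σ _), disjUnion_val,
    Multiset.map_add, image_val_of_injOn (support_injOn_cycleFactorsFinset σ),
    image_val_of_injOn singleton_injective.injOn, Multiset.map_map, Multiset.map_map,
    parts_partition, cycleType_def]
  simp [card_compl]

end BlockSizes

section CycleTypes

open Finset Equiv.Perm
open Multiset (replicate)
open scoped Nat

lemma prod_toFinset_add_of_disjoint {ι M : Type*} [DecidableEq ι] [CommMonoid M] {s t : Multiset ι}
    (hst : Disjoint s t) (f : ℕ → M) :
    ∏ i ∈ (s + t).toFinset, f ((s + t).count i) =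
      (∏ i ∈ s.toFinset, f (s.count i)) * ∏ i ∈ t.toFinset, f (t.count i) := by
  rw [Multiset.toFinset_add, prod_union (Multiset.disjoint_toFinset.2 hst)]
  congr 1 <;> refine prod_congr rfl fun i hi ↦ ?_ <;> rw [Multiset.mem_toFinset] at hi
  · rw [Multiset.count_add, Multiset.count_eq_zero.2 (Multiset.disjoint_left.1 hst hi), add_zero]
  · rw [Multiset.count_add, Multiset.count_eq_zero.2 (Multiset.disjoint_right.1 hst hi), zero_add]

lemma filter_two_le_parts_add_replicate_one {n : ℕ} (P : n.Partition) :
    P.parts.filter (2 ≤ ·) + replicate (P.parts.count 1) 1 = P.parts := by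
  conv_rhs => rw [← Multiset.filter_add_not (2 ≤ ·) P.parts]
  rw [← Multiset.filter_eq']
  congr 1
  refine Multiset.filter_congr fun m hm ↦ ?_
  have := P.parts_pos hm
  lia

variable {V : Type*} [Fintype V] [DecidableEq V]

lemma partition_surjective :
    Function.Surjective (partition : Equiv.Perm V → (Fintype.card V).Partition) := by
  intro P
  have hsum : (P.parts.filter (2 ≤ ·)).sum + P.parts.count 1 = Fintype.card V := by
    simpa [P.parts_sum] using congrArg Multiset.sum (filter_two_le_parts_add_replicate_one P)
  obtain ⟨σ, hσ⟩ := (exists_with_cycleType_iff V).2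
    ⟨Nat.le_of_add_right_le hsum.le, fun m hm ↦ Multiset.of_mem_filter hm⟩
  refine ⟨σ, Nat.Partition.ext ?_⟩
  rw [parts_partition, ← sum_cycleType, hσ, ← Nat.eq_sub_of_add_eq' hsum,
    filter_two_le_parts_add_replicate_one]

lemma prod_factorial_count_parts_partition (σ : Equiv.Perm V) :
    ∏ m ∈ σ.partition.parts.toFinset, (σ.partition.parts.count m)! =
      (∏ m ∈ σ.cycleType.toFinset, (σ.cycleType.count m)!) *
        (Fintype.card V - σ.cycleType.sum)! := by
  have hdisj (r : ℕ) : Disjoint σ.cycleType (replicate r 1) :=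
    Multiset.disjoint_left.2 fun hm hm' ↦
      (one_lt_of_mem_cycleType hm).ne' (Multiset.eq_of_mem_replicate hm')
  have hones (r : ℕ) : ∏ m ∈ (replicate r 1).toFinset, ((replicate r 1).count m)! = r ! := by
    obtain rfl | hr := eq_or_ne r 0
    · simp
    · simp [Multiset.toFinset_replicate, hr]
  rw [parts_partition, prod_toFinset_add_of_disjoint (hdisj _), hones, sum_cycleType]

lemma card_filter_partition_eq_mul (P : (Fintype.card V).Partition) :
    #{σ : Equiv.Perm V | σ.partition = P} *
      ((∏ m ∈ P.parts.toFinset, (P.parts.count m)!) * P.parts.prod) = (Fintype.card V)! := by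
  obtain ⟨τ, rfl⟩ := partition_surjective P
  have hprod : τ.partition.parts.prod = τ.cycleType.prod := by simp [parts_partition]
  have hconj : #{σ : Equiv.Perm V | σ.partition = τ.partition} = Nat.card {σ | IsConj τ σ} := by
    rw [Nat.card_coe_set_eq, ← Set.ncard_coe_finset, coe_filter_univ]
    simp only [← partition_eq_of_isConj, isConj_comm]
  rw [prod_factorial_count_parts_partition, hprod, hconj, ← card_isConj_mul_eq τ]
  ring

lemma sign_eq_neg_one_pow_card_sub_card_parts (σ : Equiv.Perm V) :
    σ.sign = (-1) ^ (Fintype.card V - σ.partition.parts.card) := by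
  have hsupp : #σ.support ≤ Fintype.card V := card_le_univ _
  have hcard : σ.cycleType.card ≤ #σ.support := by
    rw [← sum_cycleType]
    simpa using σ.cycleType.card_nsmul_le_sum (a := 1) fun _ hm ↦ (one_lt_of_mem_cycleType hm).le
  have hparts : σ.partition.parts.card = σ.cycleType.card + (Fintype.card V - #σ.support) := by
    rw [parts_partition, Multiset.card_add, Multiset.card_replicate]
  rw [sign_of_cycleType, sum_cycleType]
  refine neg_one_pow_congr ?_
  grind

lemma sum_sign_of_partition_eq (P : (Fintype.card V).Partition) :
    ∑ σ : Equiv.Perm V with σ.partition = P, (σ.sign : ℤ) =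
      #{σ : Equiv.Perm V | σ.partition = P} * (-1) ^ (Fintype.card V - P.parts.card) := by
  rw [← nsmul_eq_mul]
  refine sum_eq_card_nsmul fun σ hσ ↦ ?_
  simp [sign_eq_neg_one_pow_card_sub_card_parts, (mem_filter_univ σ).1 hσ]

end CycleTypes

theorem sign_sum_graphs_with_component_sizes_general {V : Type*} [Fintype V] [DecidableEq V]
    (I : Multiset ℕ) (hpos : ∀ m ∈ I, 0 < m) (hsum : I.sum = Fintype.card V) :
    ((∏ m ∈ I.toFinset, Nat.factorial (I.count m) : ℕ) : ℤ) * (I.prod : ℤ) *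
        (∑ G ∈ Finset.univ.filter
            (fun G : SimpleGraph V =>
              (Finset.univ.val.map fun c : G.ConnectedComponent => Nat.card c.supp) = I),
          (-1 : ℤ) ^ (Nat.card G.edgeSet)) =
      (-1 : ℤ) ^ (Fintype.card V - Multiset.card I) * (Nat.factorial (Fintype.card V) : ℤ) := by
  let P : (Fintype.card V).Partition := ⟨I, hpos _, hsum⟩
  have hgraphs := sum_neg_one_pow_card_edgeSet_eq_sum_sign (V := V) (blockSizes · = I)
  have hpartition (σ : Equiv.Perm V) : σ.partition.parts = I ↔ σ.partition = P :=
    (Nat.Partition.ext_iff (x := σ.partition) (y := P)).symm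
  simp only [blockSizes_reachableSetoid, blockSizes_sameCycleSetoid, hpartition,
    sum_sign_of_partition_eq] at hgraphs
  rw [hgraphs, ← card_filter_partition_eq_mul P]
  push_cast
  ring

/-- Let `I` be a partition of `k` (a multiset of positive integers with
sum `k` and `s = I.card` parts), and let `C_I` be the sum of `(-1)^{e(G)}` over all
simple graphs `G` on `Fin k` whose multiset of connected component cardinalities is
`I`. Then `(∏_m r_m!) · (k₁⋯k_s) · C_I = (-1)^{k-s} · k!`, where `r_m` is the
multiplicity of the part size `m` in `I`. -/
theorem sign_sum_graphs_with_component_sizes (k : ℕ) (hk : 1 ≤ k) (I : Multiset ℕ)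
    (hpos : ∀ m ∈ I, 0 < m) (hsum : I.sum = k) :
    ((∏ m ∈ I.toFinset, Nat.factorial (I.count m) : ℕ) : ℤ) * (I.prod : ℤ) *
        (∑ G ∈ Finset.univ.filter
            (fun G : SimpleGraph (Fin k) =>
              (Finset.univ.val.map fun c : G.ConnectedComponent => Nat.card c.supp) = I),
          (-1 : ℤ) ^ (Nat.card G.edgeSet)) =
      (-1 : ℤ) ^ (k - Multiset.card I) * (Nat.factorial k : ℤ) := by
  simpa using sign_sum_graphs_with_component_sizes_general (V := Fin k) I hpos (by simpa using hsum)
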